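/- For every real number x > 0, the series ∑_{k=1}^∞ ((-1)^k / k) · C(x,k) converges, and the digamma function at x+1 (i.e., the derivative of ln Γ at x+1, Γ'(x+1)/Γ(x+1)) equals -γ minus the sum of this series. -/

import Mathlib

/-- The generalized binomial coefficient `C(x, k) = x (x-1) ⋯ (x-k+1) / k!`. -/
noncomputable def genBinom (x : ℝ) (k : ℕ) : ℝ :=
  (∏ i ∈ Finset.range k, (x - i)) / (Nat.factorial k : ℝ)

/-!
Let `H x = ∫₀¹ (1 - t ^ x) / (1 - t) dt`. Expanding `t ^ x = (1 + (t - 1)) ^ x` in powers of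
`t - 1` and integrating termwise turns `H x` into the negative of Stern's series. On the other hand
both `H` and `x ↦ ψ(x + 1) + γ` are increasing on `(-1, ∞)`, vanish at `0`, and grow by
`1 / (x + 1)` when `x` grows by `1`. Their difference is therefore `1`-periodic, and monotonicity
bounds its oscillation by `1 / (x + 1)` for arbitrarily large `x`, so the two functions agree.
-/

section Stern

open Set Filter Topology MeasureTheory

section MonotoneDifferenceEquation

variable {a : ℝ} {F G g : ℝ → ℝ}

lemma sub_apply_add_natCast (hF : ∀ x, a < x → F (x + 1) = F x + g x)
    (hG : ∀ x, a < x → G (x + 1) = G x + g x) {x : ℝ} (hx : a < x) (n : ℕ) :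
    F (x + n) - G (x + n) = F x - G x := by
  induction n with
  | zero => simp
  | succ n ih =>
    have hxn : a < x + n := hx.trans_le (le_add_of_nonneg_right n.cast_nonneg)
    rw [Nat.cast_succ, ← add_assoc, hF _ hxn, hG _ hxn, add_sub_add_right_eq_sub, ih]

lemma abs_sub_sub_sub_le_of_monotoneOn (hFm : MonotoneOn F (Ioi a)) (hGm : MonotoneOn G (Ioi a))
    (hF : ∀ x, a < x → F (x + 1) = F x + g x) (hG : ∀ x, a < x → G (x + 1) = G x + g x)
    {x y : ℝ} (hx : a < x) (hxy : x ≤ y) (hyx : y ≤ x + 1) :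
    |(F y - G y) - (F x - G x)| ≤ g x := by
  have hy : a < y := hx.trans_le hxy
  have hx1 : a < x + 1 := hy.trans_le hyx
  have hFxy : F x ≤ F y := hFm hx hy hxy
  have hGxy : G x ≤ G y := hGm hx hy hxy
  have hFyx : F y ≤ F x + g x := hF x hx ▸ hFm hy hx1 hyx
  have hGyx : G y ≤ G x + g x := hG x hx ▸ hGm hy hx1 hyx
  rw [abs_le]
  constructor <;> linarith

theorem eqOn_of_monotoneOn_of_apply_add_one (hFm : MonotoneOn F (Ioi a))
    (hGm : MonotoneOn G (Ioi a)) (hF : ∀ x, a < x → F (x + 1) = F x + g x)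
    (hG : ∀ x, a < x → G (x + 1) = G x + g x) (hg : Tendsto g atTop (𝓝 0))
    {b : ℝ} (hb : a < b) (hFG : F b = G b) : EqOn F G (Ioi a) := by
  intro x hx
  let m : ℕ → ℕ := fun n => ⌊x + n - b⌋₊
  have hm : Tendsto (fun n : ℕ => b + m n) atTop atTop :=
    tendsto_atTop_add_const_left _ _ <| tendsto_natCast_atTop_atTop.comp <|
      tendsto_nat_floor_atTop.comp <| tendsto_atTop_add_const_right _ (-b) <|
        tendsto_atTop_add_const_left _ x tendsto_natCast_atTop_atTop
  have hle : ∀ᶠ n : ℕ in atTop, |F x - G x| ≤ g (b + m n) := by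
    filter_upwards [tendsto_natCast_atTop_atTop.eventually_ge_atTop (b - x)] with n hn
    have hbm : a < b + m n := hb.trans_le (le_add_of_nonneg_right (m n).cast_nonneg)
    have hlow : (m n : ℝ) ≤ x + n - b := Nat.floor_le (by linarith)
    have hupp : x + n - b < m n + 1 := Nat.lt_floor_add_one _
    have hosc := abs_sub_sub_sub_le_of_monotoneOn hFm hGm hF hG hbm
      (show b + m n ≤ x + n by linarith) (by linarith)
    rwa [sub_apply_add_natCast hF hG hx, sub_apply_add_natCast hF hG hb, hFG, sub_self,
      sub_zero] at hosc
  have hzero : |F x - G x| ≤ 0 := ge_of_tendsto (hg.comp hm) hle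
  exact sub_eq_zero.1 (abs_nonpos_iff.1 hzero)

end MonotoneDifferenceEquation

section Digamma

lemma ne_neg_natCast_of_pos {y : ℝ} (hy : 0 < y) (m : ℕ) : y ≠ -m :=
  ((neg_nonpos.2 m.cast_nonneg).trans_lt hy).ne'

lemma monotoneOn_logDeriv_Gamma : MonotoneOn (logDeriv Real.Gamma) (Ioi 0) := by
  have hdiff : ∀ y ∈ Ioi (0 : ℝ), DifferentiableAt ℝ Real.Gamma y := fun y hy =>
    Real.differentiableAt_Gamma (ne_neg_natCast_of_pos hy)
  have hne : ∀ y ∈ Ioi (0 : ℝ), Real.Gamma y ≠ 0 := fun y hy => (Real.Gamma_pos_of_pos hy).ne'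
  exact (Real.convexOn_log_Gamma.monotoneOn_deriv fun y hy => (hdiff y hy).log (hne y hy)).congr
    fun y hy => deriv.log (hdiff y hy) (hne y hy)

lemma logDeriv_Gamma_add_one {y : ℝ} (hy : ∀ m : ℕ, y ≠ -m) :
    logDeriv Real.Gamma (y + 1) = logDeriv Real.Gamma y + 1 / y := by
  have hy0 : y ≠ 0 := by simpa using hy 0
  have hfun : (fun z => Real.Gamma (z + 1)) =ᶠ[𝓝 y] fun z => z * Real.Gamma z := by
    filter_upwards [eventually_ne_nhds hy0] with z hz using Real.Gamma_add_one hz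
  calc logDeriv Real.Gamma (y + 1)
      = logDeriv (fun z => Real.Gamma (z + 1)) y := by
        simp only [logDeriv_apply, deriv_comp_add_const]
    _ = logDeriv (fun z => z * Real.Gamma z) y := (logDeriv_congr_nhds hfun).eq_of_nhds
    _ = logDeriv Real.Gamma y + 1 / y := by
        rw [logDeriv_mul y hy0 (Real.Gamma_ne_zero hy) differentiableAt_fun_id
          (Real.differentiableAt_Gamma hy), logDeriv_id', add_comm]

lemma logDeriv_Gamma_one : logDeriv Real.Gamma 1 = -Real.eulerMascheroniConstant := by
  rw [logDeriv_apply, Real.hasDerivAt_Gamma_one.deriv, Real.Gamma_one, div_one]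

end Digamma

section HarmonicIntegral

/-- Euler's interpolation `∫₀¹ (1 - t ^ x) / (1 - t) dt` of the harmonic numbers. The integral
converges for `-1 < x`. -/
noncomputable def harmonicIntegral (x : ℝ) : ℝ :=
  ∫ t in Ioo (0 : ℝ) 1, (1 - t ^ x) / (1 - t)

lemma one_sub_rpow_le_max_mul_one_sub (x : ℝ) {t : ℝ} (ht0 : 0 < t) (ht1 : t ≤ 1) :
    1 - t ^ x ≤ max 1 x * (1 - t) := by
  have hbernoulli : 1 + max 1 x * (t - 1) ≤ (1 + (t - 1)) ^ max 1 x :=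
    one_add_mul_self_le_rpow_one_add (by linarith) (le_max_left 1 x)
  rw [add_sub_cancel] at hbernoulli
  have hmono : t ^ max 1 x ≤ t ^ x :=
    Real.rpow_le_rpow_of_exponent_ge ht0 ht1 (le_max_right 1 x)
  linarith

lemma one_sub_rpow_add_one_div {t : ℝ} (x : ℝ) (ht : t ∈ Ioo (0 : ℝ) 1) :
    (1 - t ^ (x + 1)) / (1 - t) = (1 - t ^ x) / (1 - t) + t ^ x := by
  have hne : 1 - t ≠ 0 := (sub_pos.2 ht.2).ne'
  rw [Real.rpow_add_one ht.1.ne']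
  field_simp
  ring

lemma integrableOn_one_sub_rpow_div_of_nonneg {x : ℝ} (hx : 0 ≤ x) :
    IntegrableOn (fun t : ℝ => (1 - t ^ x) / (1 - t)) (Ioo 0 1) := by
  refine Measure.integrableOn_of_bounded (M := max 1 x) (by simp)
    (Measurable.aestronglyMeasurable (by fun_prop)) ?_
  filter_upwards [ae_restrict_mem measurableSet_Ioo] with t ht
  have hpos : 0 < 1 - t := sub_pos.2 ht.2
  have hnum : 0 ≤ 1 - t ^ x := sub_nonneg.2 (Real.rpow_le_one ht.1.le ht.2.le hx)
  rw [Real.norm_of_nonneg (div_nonneg hnum hpos.le), div_le_iff₀ hpos]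
  exact one_sub_rpow_le_max_mul_one_sub x ht.1 ht.2.le

lemma integrableOn_one_sub_rpow_div {x : ℝ} (hx : -1 < x) :
    IntegrableOn (fun t : ℝ => (1 - t ^ x) / (1 - t)) (Ioo 0 1) := by
  have hshift := integrableOn_one_sub_rpow_div_of_nonneg (neg_lt_iff_pos_add.1 hx).le
  have hrpow : IntegrableOn (fun t : ℝ => t ^ x) (Ioo 0 1) :=
    (intervalIntegral.integrableOn_Ioo_rpow_iff one_pos).2 hx
  refine (hshift.sub hrpow).congr_fun (fun t ht => ?_) measurableSet_Ioo
  simp only [Pi.sub_apply, one_sub_rpow_add_one_div x ht, add_sub_cancel_right]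

lemma monotoneOn_harmonicIntegral : MonotoneOn harmonicIntegral (Ioi (-1)) := by
  intro x hx y hy hxy
  refine setIntegral_mono_on (integrableOn_one_sub_rpow_div hx) (integrableOn_one_sub_rpow_div hy)
    measurableSet_Ioo fun t ht => ?_
  have hpos : 0 < 1 - t := sub_pos.2 ht.2
  have hrpow : t ^ y ≤ t ^ x := Real.rpow_le_rpow_of_exponent_ge ht.1 ht.2.le hxy
  gcongr

lemma setIntegral_Ioo_rpow {x : ℝ} (hx : -1 < x) :
    ∫ t in Ioo (0 : ℝ) 1, t ^ x = 1 / (x + 1) := by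
  rw [← integral_Ioc_eq_integral_Ioo, ← intervalIntegral.integral_of_le zero_le_one,
    integral_rpow (Or.inl hx), Real.one_rpow, Real.zero_rpow (by linarith), sub_zero]

lemma harmonicIntegral_zero : harmonicIntegral 0 = 0 := by
  simp [harmonicIntegral]

lemma harmonicIntegral_add_one {x : ℝ} (hx : -1 < x) :
    harmonicIntegral (x + 1) = harmonicIntegral x + 1 / (x + 1) := by
  have hrpow : IntegrableOn (fun t : ℝ => t ^ x) (Ioo 0 1) :=
    (intervalIntegral.integrableOn_Ioo_rpow_iff one_pos).2 hx
  rw [harmonicIntegral, setIntegral_congr_fun measurableSet_Ioo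
    fun t ht => one_sub_rpow_add_one_div x ht,
    integral_add (integrableOn_one_sub_rpow_div hx) hrpow, setIntegral_Ioo_rpow hx,
    harmonicIntegral]

theorem logDeriv_Gamma_add_one_eq_harmonicIntegral {x : ℝ} (hx : -1 < x) :
    logDeriv Real.Gamma (x + 1) = -Real.eulerMascheroniConstant + harmonicIntegral x := by
  have hpos : ∀ y : ℝ, -1 < y → 0 < y + 1 := fun y => neg_lt_iff_pos_add.1
  refine eqOn_of_monotoneOn_of_apply_add_one (a := -1) (b := 0) (g := fun y => 1 / (y + 1))
    (F := fun y => logDeriv Real.Gamma (y + 1))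
    (G := fun y => -Real.eulerMascheroniConstant + harmonicIntegral y)
    ?_ (monotoneOn_harmonicIntegral.const_add _) ?_ ?_ ?_ neg_one_lt_zero ?_ hx
  · exact fun y hy z hz hyz => monotoneOn_logDeriv_Gamma (hpos y hy) (hpos z hz) (by gcongr)
  · exact fun y hy => logDeriv_Gamma_add_one (ne_neg_natCast_of_pos (hpos y hy))
  · intro y hy
    rw [harmonicIntegral_add_one hy, add_assoc]
  · exact tendsto_const_nhds.div_atTop (tendsto_atTop_add_const_right _ 1 tendsto_id)
  · rw [zero_add, logDeriv_Gamma_one, harmonicIntegral_zero, add_zero]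

end HarmonicIntegral

section BinomialSeries

lemma genBinom_zero (x : ℝ) : genBinom x 0 = 1 := by
  simp [genBinom]

lemma genBinom_succ (x : ℝ) (k : ℕ) :
    genBinom x (k + 1) = genBinom x k * ((x - k) / (k + 1)) := by
  rw [genBinom, genBinom, Finset.prod_range_succ, Nat.factorial_succ, mul_comm (k + 1),
    Nat.cast_mul, Nat.cast_succ, mul_div_mul_comm]

lemma genBinom_eq_choose (x : ℝ) (k : ℕ) : genBinom x k = Ring.choose x k := by
  rw [Ring.choose_eq_smul, genBinom, div_eq_inv_mul, smul_eq_mul, ← Polynomial.aeval_eq_smeval,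
    Polynomial.aeval_def, ← Polynomial.eval_map, algebraMap_int_eq, descPochhammer_map,
    descPochhammer_eval_eq_prod_range]

lemma mul_abs_genBinom_succ_div_le_sub {x : ℝ} (hx : -1 < x) {k : ℕ} (hk : x ≤ k) :
    (x + 1) * (|genBinom x (k + 1)| / (k + 1)) ≤ |genBinom x k| - |genBinom x (k + 1)| := by
  have hk1 : (0 : ℝ) < k + 1 := by positivity
  have hsucc : |genBinom x (k + 1)| = |genBinom x k| * ((k - x) / (k + 1)) := by
    rw [genBinom_succ, abs_mul, abs_div, abs_sub_comm, abs_of_nonneg (sub_nonneg.2 hk),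
      abs_of_pos hk1]
  have hanti : |genBinom x (k + 1)| ≤ |genBinom x k| := by
    rw [hsucc]
    exact mul_le_of_le_one_right (abs_nonneg _) ((div_le_one hk1).2 (by linarith))
  calc (x + 1) * (|genBinom x (k + 1)| / (k + 1))
      ≤ (x + 1) * (|genBinom x k| / (k + 1)) := by
        have : 0 ≤ x + 1 := (neg_lt_iff_pos_add.1 hx).le
        gcongr
    _ = |genBinom x k| - |genBinom x (k + 1)| := by
        rw [hsucc]
        field_simp
        ring

lemma summable_abs_genBinom_succ_div {x : ℝ} (hx : -1 < x) :
    Summable fun k : ℕ => |genBinom x (k + 1)| / ((k : ℝ) + 1) := by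
  let K := ⌈x⌉₊
  have hx1 : 0 < x + 1 := neg_lt_iff_pos_add.1 hx
  refine (summable_nat_add_iff K).1 <| summable_of_sum_range_le (c := |genBinom x K| / (x + 1))
    (fun k => by positivity) fun n => ?_
  have hterm (k : ℕ) := mul_abs_genBinom_succ_div_le_sub hx
    (show x ≤ (k + K : ℕ) from (Nat.le_ceil x).trans (Nat.cast_le.2 (Nat.le_add_left K k)))
  rw [le_div_iff₀' hx1, Finset.mul_sum]
  calc ∑ k ∈ Finset.range n, (x + 1) * (|genBinom x (k + K + 1)| / (((k + K : ℕ) : ℝ) + 1))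
      ≤ ∑ k ∈ Finset.range n, (|genBinom x (k + K)| - |genBinom x (k + 1 + K)|) :=
        Finset.sum_le_sum fun k _ => (hterm k).trans_eq (by rw [add_right_comm])
    _ = |genBinom x K| - |genBinom x (n + K)| := by
        rw [Finset.sum_range_sub' fun k => |genBinom x (k + K)|, zero_add]
    _ ≤ |genBinom x K| := sub_le_self _ (abs_nonneg _)

lemma hasSum_genBinom_mul_pow (x : ℝ) {t : ℝ} (ht : |t - 1| < 1) :
    HasSum (fun k : ℕ => genBinom x k * (t - 1) ^ k) (t ^ x) := by
  have hball : t - 1 ∈ Metric.eball (0 : ℝ) 1 := by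
    simpa [← ofReal_norm] using ht
  have hseries := (Real.one_add_rpow_hasFPowerSeriesOnBall_zero (a := x)).hasSum hball
  simpa only [binomialSeries_apply, List.ofFn_const, List.prod_replicate, smul_eq_mul, zero_add,
    ← genBinom_eq_choose, add_sub_cancel] using hseries

lemma hasSum_genBinom_succ_mul_pow (x : ℝ) {t : ℝ} (ht : |t - 1| < 1) (ht1 : t ≠ 1) :
    HasSum (fun k : ℕ => genBinom x (k + 1) * (t - 1) ^ k) ((1 - t ^ x) / (1 - t)) := by
  have hne : t - 1 ≠ 0 := sub_ne_zero.2 ht1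
  have htail := ((hasSum_nat_add_iff' 1).2 (hasSum_genBinom_mul_pow x ht)).div_const (t - 1)
  rw [← neg_div_neg_eq, neg_sub, neg_sub]
  simpa only [Finset.sum_range_one, pow_zero, mul_one, genBinom_zero, pow_succ, ← mul_assoc,
    mul_div_cancel_right₀ _ hne] using htail

end BinomialSeries

section TermwiseIntegration

lemma setIntegral_Ioo_sub_one_pow (k : ℕ) :
    ∫ t in Ioo (0 : ℝ) 1, (t - 1) ^ k = (-1) ^ k / ((k : ℝ) + 1) := by
  rw [← integral_Ioc_eq_integral_Ioo, ← intervalIntegral.integral_of_le zero_le_one,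
    intervalIntegral.integral_comp_sub_right (fun t : ℝ => t ^ k), integral_pow]
  simp [pow_succ]

lemma setIntegral_Ioo_abs_sub_one_pow (k : ℕ) :
    ∫ t in Ioo (0 : ℝ) 1, |t - 1| ^ k = 1 / ((k : ℝ) + 1) := by
  have habs : EqOn (fun t : ℝ => |t - 1| ^ k) (fun t => (-1) ^ k * (t - 1) ^ k) (Ioo 0 1) := by
    intro t ht
    simp only [abs_of_neg (sub_neg.2 ht.2), neg_pow (t - 1)]
  rw [setIntegral_congr_fun measurableSet_Ioo habs, integral_const_mul,
    setIntegral_Ioo_sub_one_pow, ← mul_div_assoc, ← mul_pow, neg_one_mul, neg_neg, one_pow]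

theorem hasSum_harmonicIntegral {x : ℝ} (hx : -1 < x) :
    HasSum (fun k : ℕ => (-1) ^ k / ((k : ℝ) + 1) * genBinom x (k + 1)) (harmonicIntegral x) := by
  have hint (k : ℕ) : IntegrableOn (fun t : ℝ => genBinom x (k + 1) * (t - 1) ^ k) (Ioo 0 1) :=
    (Continuous.integrableOn_Icc (by fun_prop)).mono_set Ioo_subset_Icc_self
  have hnorm : Summable fun k : ℕ => ∫ t in Ioo (0 : ℝ) 1, ‖genBinom x (k + 1) * (t - 1) ^ k‖ := by
    simpa only [norm_mul, norm_pow, Real.norm_eq_abs, integral_const_mul,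
      setIntegral_Ioo_abs_sub_one_pow, mul_one_div] using summable_abs_genBinom_succ_div hx
  have htsum : ∫ t in Ioo (0 : ℝ) 1, ∑' k : ℕ, genBinom x (k + 1) * (t - 1) ^ k =
      harmonicIntegral x :=
    setIntegral_congr_fun measurableSet_Ioo fun t ht =>
      (hasSum_genBinom_succ_mul_pow x (abs_lt.2 ⟨by linarith [ht.1], by linarith [ht.2]⟩)
        ht.2.ne).tsum_eq
  have htermwise := hasSum_integral_of_summable_integral_norm hint hnorm
  rw [htsum] at htermwise
  simpa only [integral_const_mul, setIntegral_Ioo_sub_one_pow, mul_comm] using htermwise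

end TermwiseIntegration

lemma tendsto_sum_Icc_one_of_hasSum {M : Type*} [AddCommMonoid M] [TopologicalSpace M]
    {f : ℕ → M} {s : M} (h : HasSum (fun k => f (k + 1)) s) :
    Tendsto (fun N : ℕ => ∑ k ∈ Finset.Icc 1 N, f k) atTop (𝓝 s) := by
  refine h.tendsto_sum_nat.congr fun N => ?_
  rw [Finset.range_eq_Ico, Finset.sum_Ico_add', zero_add, Finset.Ico_add_one_right_eq_Icc]

end Stern

theorem stern_series_digamma_general (x : ℝ) (hx : -1 < x) :
    ∃ S : ℝ,
      Filter.Tendsto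
        (fun N : ℕ => ∑ k ∈ Finset.Icc 1 N, ((-1) ^ k / (k : ℝ)) * genBinom x k)
        Filter.atTop (nhds S) ∧
      deriv Real.Gamma (x + 1) / Real.Gamma (x + 1) =
        -Real.eulerMascheroniConstant - S := by
  refine ⟨-harmonicIntegral x, tendsto_sum_Icc_one_of_hasSum ?_, ?_⟩
  · refine (hasSum_harmonicIntegral hx).neg.congr_fun fun k => ?_
    rw [pow_succ, Nat.cast_succ, mul_neg_one, neg_div, neg_mul]
  · rw [sub_neg_eq_add, ← logDeriv_Gamma_add_one_eq_harmonicIntegral hx, logDeriv_apply]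

theorem stern_series_digamma (x : ℝ) (hx : 0 < x) :
    ∃ S : ℝ,
      Filter.Tendsto
        (fun N : ℕ => ∑ k ∈ Finset.Icc 1 N, ((-1) ^ k / (k : ℝ)) * genBinom x k)
        Filter.atTop (nhds S) ∧
      deriv Real.Gamma (x + 1) / Real.Gamma (x + 1) =
        -Real.eulerMascheroniConstant - S :=
  stern_series_digamma_general x (neg_one_lt_zero.trans hx)
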